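/- Let f : ℕ → ℝ, g : ℕ → ℕ, and P : ℕ → Prop. Suppose: (i) 0 ≤ f(n) ≤ 1 for every n; (ii) for every n with P(n), f(n) ≥ 1/2 + f(g(n))/2; (iii) for every n with P(n), if f(g(n)) < 1 then f(n) < 1; and (iv) for every n with ¬P(n), f(n) ≤ 1/2. Then for every n₀ ∈ ℕ: f(n₀) = 1 if and only if P(g^[k](n₀)) holds for every k ∈ ℕ, where g^[k] denotes the k-fold iterate of g. -/

import Mathlib

/-!
If `f n = 1`, then `P n` holds because rejection would force `f n ≤ 1 / 2`, and `f (g n) = 1` by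
the contrapositive of soundness; so the value `1`, and with it `P`, propagates along the whole
orbit of `n₀`. Conversely, if `P` holds along the orbit of `n`, completeness says that the deficit
satisfies `1 - f n ≤ (1 - f (g n)) / 2`. Unrolling this `k` times bounds the deficit by `(1 / 2) ^ k`
for every `k`, so it vanishes.
-/

theorem stmt_3 (f : ℕ → ℝ) (g : ℕ → ℕ) (P : ℕ → Prop)
    (hbound : ∀ n, 0 ≤ f n ∧ f n ≤ 1)
    (hcompl : ∀ n, P n → f n ≥ 1 / 2 + f (g n) / 2)
    (hsound : ∀ n, P n → (f (g n) < 1 → f n < 1))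
    (hrej : ∀ n, ¬P n → f n ≤ 1 / 2) :
    ∀ n₀, f n₀ = 1 ↔ ∀ k, P (g^[k] n₀) := by
  have accepts : ∀ n, f n = 1 → P n := by
    intro n h
    by_contra hP
    linarith [hrej n hP]
  have deficit : ∀ k n, (∀ j, P (g^[j] n)) → 1 - f n ≤ (1 / 2 : ℝ) ^ k := by
    intro k
    induction k with
    | zero =>
      intro n _
      simpa using (hbound n).1
    | succ k ih =>
      intro n h
      have h1 := ih (g n) (fun j => h (j + 1))
      have h2 := hcompl n (h 0)
      rw [pow_succ]
      linarith
  intro n₀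
  constructor
  · intro h k
    apply accepts
    induction k with
    | zero => exact h
    | succ k ih =>
      rw [Function.iterate_succ_apply']
      by_contra hne
      exact (hsound _ (accepts _ ih) (lt_of_le_of_ne (hbound _).2 hne)).ne ih
  · intro h
    have hlim : Filter.Tendsto (fun k : ℕ => (1 / 2 : ℝ) ^ k) Filter.atTop (nhds 0) :=
      tendsto_pow_atTop_nhds_zero_of_lt_one (by norm_num) (by norm_num)
    have h0 : 1 - f n₀ ≤ 0 := ge_of_tendsto' hlim (fun k => deficit k n₀ h)
    linarith [(hbound n₀).2]
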